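/- Let G be the set of smooth maps γ : ℝ → ℝ with γ'(θ) > 0 and γ(θ+2π) = γ(θ)+2π for all θ, and γ(π) = π. For n ≥ 1 let B_n be the set of γ ∈ G with γ'(π) = 1 and γ^{(k)}(π) = 0 for all 2 ≤ k ≤ n. Then: (i) G is a group under composition (each γ ∈ G is a bijection of ℝ whose inverse again lies in G); (ii) each B_n is a subgroup of G; and (iii) B_n is normal in G, i.e. for every γ ∈ B_n and γ₀ ∈ G one has γ₀ ∘ γ ∘ γ₀^{-1} ∈ B_n. -/

import Mathlib

open scoped Real

/-- Lifts of smooth orientation-preserving circle diffeomorphisms fixing `-1`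
(i.e. fixing `θ = π`). -/
def CircG : Set (ℝ → ℝ) :=
  {γ | ContDiff ℝ (⊤ : ℕ∞) γ ∧ (∀ θ : ℝ, 0 < deriv γ θ) ∧
       (∀ θ : ℝ, γ (θ + 2 * π) = γ θ + 2 * π) ∧ γ π = π}

/-- The subgroup `B_n`: elements of `CircG` with derivative `1` at `π` and vanishing
`k`-th derivatives at `π` for `2 ≤ k ≤ n`. -/
def CircB (n : ℕ) : Set (ℝ → ℝ) :=
  {γ ∈ CircG | deriv γ π = 1 ∧ ∀ k : ℕ, 2 ≤ k → k ≤ n → iteratedDeriv k γ π = 0}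

lemma circ_jet {n : ℕ} {g g' f f' : ℝ → ℝ} {x : ℝ} (hg : ContDiff ℝ (⊤ : ℕ∞) g)
    (hg' : ContDiff ℝ (⊤ : ℕ∞) g') (hf : ContDiff ℝ (⊤ : ℕ∞) f) (hf' : ContDiff ℝ (⊤ : ℕ∞) f')
    (h1 : ∀ k ≤ n, iteratedDeriv k f x = iteratedDeriv k f' x)
    (h2 : ∀ k ≤ n, iteratedDeriv k g (f x) = iteratedDeriv k g' (f x)) :
    ∀ k ≤ n, iteratedDeriv k (g ∘ f) x = iteratedDeriv k (g' ∘ f') x := by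
  intro k hk
  have h0 : f x = f' x := by simpa using h1 0 (Nat.zero_le _)
  have hkt : (k : WithTop ℕ∞) ≤ ((⊤ : ℕ∞) : WithTop ℕ∞) := by exact_mod_cast le_top
  rw [iteratedDeriv_comp_eq_sum_orderedFinpartition hg.contDiffAt hf.contDiffAt hkt,
    iteratedDeriv_comp_eq_sum_orderedFinpartition hg'.contDiffAt hf'.contDiffAt hkt, ← h0]
  refine Finset.sum_congr rfl fun c _ => ?_
  rw [h2 _ (c.length_le.trans hk)]
  congr 1
  exact Finset.prod_congr rfl fun j _ => h1 _ ((c.partSize_le j).trans hk)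

lemma circB_iff {n : ℕ} (hn : 1 ≤ n) {γ : ℝ → ℝ} :
    γ ∈ CircB n ↔ γ ∈ CircG ∧ ∀ k ≤ n, iteratedDeriv k γ π = iteratedDeriv k id π := by
  constructor
  · rintro ⟨h, h1, h2⟩
    refine ⟨h, fun k hk => ?_⟩
    rw [iteratedDeriv_id]
    rcases k with _ | _ | k
    · simpa using h.2.2.2
    · simpa [iteratedDeriv_one] using h1
    · simpa using h2 (k + 2) (by omega) hk
  · rintro ⟨h, h1⟩
    refine ⟨h, ?_, fun k h2 hk => ?_⟩
    · simpa [iteratedDeriv_one] using h1 1 hn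
    · rw [h1 k hk, iteratedDeriv_id, if_neg (by omega), if_neg (by omega)]

lemma circG_id : (id : ℝ → ℝ) ∈ CircG := by
  refine ⟨contDiff_id, fun θ => by simp, fun θ => rfl, rfl⟩

lemma circG_comp {f g : ℝ → ℝ} (hf : f ∈ CircG) (hg : g ∈ CircG) : f ∘ g ∈ CircG := by
  obtain ⟨f1, f2, f3, f4⟩ := hf
  obtain ⟨g1, g2, g3, g4⟩ := hg
  refine ⟨f1.comp g1, fun θ => ?_, fun θ => by simp [g3, f3], by simp [g4, f4]⟩
  rw [deriv_comp θ (f1.differentiable (by simp) _) (g1.differentiable (by simp) _)]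
  exact mul_pos (f2 _) (g2 _)

lemma circG_bij {f : ℝ → ℝ} (hf : f ∈ CircG) : StrictMono f ∧ Function.Surjective f := by
  obtain ⟨f1, f2, f3, f4⟩ := hf
  refine ⟨strictMono_of_deriv_pos f2, fun y => ?_⟩
  have hp : Function.Periodic (fun x => f x - x) (2 * π) := fun x => by
    simp only [f3]; ring
  have hk : ∀ n : ℤ, f (π + n * (2 * π)) = π + n * (2 * π) := fun n => by
    have := hp.int_mul n π
    simp only [f4] at this
    linarith
  have h2 : 0 < 2 * π := Real.two_pi_pos
  refine mem_range_of_exists_le_of_exists_ge f1.continuous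
    ⟨π + (⌊(y - π) / (2 * π)⌋ : ℤ) * (2 * π), ?_⟩ ⟨π + (⌈(y - π) / (2 * π)⌉ : ℤ) * (2 * π), ?_⟩
  · rw [hk]
    have := (le_div_iff₀ h2).1 (Int.floor_le ((y - π) / (2 * π)))
    linarith
  · rw [hk]
    have := (div_le_iff₀ h2).1 (Int.le_ceil ((y - π) / (2 * π)))
    linarith

lemma circG_inv {f d : ℝ → ℝ} (hf : f ∈ CircG) (hl : Function.LeftInverse d f)
    (hr : Function.RightInverse d f) : d ∈ CircG := by
  obtain ⟨hm, hs⟩ := circG_bij hf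
  obtain ⟨f1, f2, f3, f4⟩ := hf
  let e : ℝ ≃ₜ ℝ := (hm.orderIsoOfSurjective f hs).toHomeomorph
  have he : (e : ℝ → ℝ) = f := rfl
  have hes : (e.symm : ℝ → ℝ) = d := by
    funext y
    rw [e.symm_apply_eq, he]
    exact (hr y).symm
  have hd : ∀ x, HasDerivAt f (deriv f x) x := fun x =>
    (f1.differentiable (by simp) x).hasDerivAt
  have hc : ContDiff ℝ (⊤ : ℕ∞) d := by
    rw [← hes]
    exact e.contDiff_symm_deriv (f' := deriv f) (fun x => (f2 x).ne') hd f1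
  refine ⟨hc, fun y => ?_, fun y => ?_, ?_⟩
  · rw [(HasDerivAt.of_local_left_inverse hc.continuous.continuousAt (hd (d y)) (f2 _).ne'
      (Filter.Eventually.of_forall hr)).deriv]
    exact inv_pos.2 (f2 _)
  · apply hm.injective
    rw [hr, f3, hr]
  · conv_lhs => rw [← f4]
    exact hl π

/-- Appendix A: (i) `CircG` is a group under composition (each element is a bijection of
`ℝ` whose inverse lies again in `CircG`); (ii) each `B_n` is a subgroup; (iii) `B_n` is
normal in `CircG`. -/
theorem stmt_15 :
    ((id : ℝ → ℝ) ∈ CircG ∧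
      (∀ γ₁ ∈ CircG, ∀ γ₂ ∈ CircG, γ₁ ∘ γ₂ ∈ CircG) ∧
      (∀ γ ∈ CircG, Function.Bijective γ ∧
        ∃ δ ∈ CircG, Function.LeftInverse δ γ ∧ Function.RightInverse δ γ))
    ∧ (∀ n : ℕ, 1 ≤ n →
        (id : ℝ → ℝ) ∈ CircB n ∧
        (∀ γ₁ ∈ CircB n, ∀ γ₂ ∈ CircB n, γ₁ ∘ γ₂ ∈ CircB n) ∧
        (∀ γ ∈ CircB n, ∀ δ : ℝ → ℝ,
          Function.LeftInverse δ γ → Function.RightInverse δ γ → δ ∈ CircB n))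
    ∧ (∀ n : ℕ, 1 ≤ n → ∀ γ ∈ CircB n, ∀ γ₀ ∈ CircG, ∀ δ₀ : ℝ → ℝ,
        Function.LeftInverse δ₀ γ₀ → Function.RightInverse δ₀ γ₀ →
        γ₀ ∘ γ ∘ δ₀ ∈ CircB n) := by
  refine ⟨⟨circG_id, fun f hf g hg => circG_comp hf hg, fun f hf => ?_⟩, fun n hn => ⟨?_, ?_, ?_⟩,
    ?_⟩
  · obtain ⟨hm, hs⟩ := circG_bij hf
    have hb : Function.Bijective f := ⟨hm.injective, hs⟩
    obtain ⟨d, hl, hr⟩ := Function.bijective_iff_has_inverse.1 hb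
    exact ⟨hb, d, circG_inv hf hl hr, hl, hr⟩
  · exact (circB_iff hn).2 ⟨circG_id, fun k _ => rfl⟩
  · intro f hf g hg
    rw [circB_iff hn] at hf hg ⊢
    refine ⟨circG_comp hf.1 hg.1, ?_⟩
    have := circ_jet (n := n) (x := π) hf.1.1 contDiff_id hg.1.1 contDiff_id hg.2
      (by rw [hg.1.2.2.2]; exact hf.2)
    exact this
  · intro f hf d hl hr
    rw [circB_iff hn] at hf ⊢
    have hd := circG_inv hf.1 hl hr
    refine ⟨hd, fun k hk => ?_⟩
    have := circ_jet (n := n) (x := π) hd.1 hd.1 hf.1.1 contDiff_id hf.2 (fun _ _ => rfl) k hk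
    rw [hl.comp_eq_id] at this
    exact this.symm
  · intro n hn f hf g hg d hl hr
    rw [circB_iff hn] at hf ⊢
    have hd := circG_inv hg hl hr
    refine ⟨circG_comp hg (circG_comp hf.1 hd), fun k hk => ?_⟩
    have h1 := circ_jet (n := n) (x := π) hf.1.1 contDiff_id hd.1 hd.1 (fun _ _ => rfl)
      (by rw [hd.2.2.2]; exact hf.2)
    have h2 := circ_jet (n := n) (x := π) hg.1 hg.1 (hf.1.1.comp hd.1)
      (contDiff_id.comp hd.1) h1 (fun _ _ => rfl) k hk
    rw [h2, Function.id_comp, hr.comp_eq_id]
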